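/- arXiv:2504.12776 — 7 statements merged into one kernel-verified Lean document; each statement's English description precedes it below -/
import Mathlib

section
/- Let Λ be a layout compatible with the bin assignment b, and let i ≠ j be two curves. If there exist elements k < k' with b(i,k) < b(j,k) and b(i,k') > b(j,k'), then there exists an element t with k ≤ t < k' such that λ_t(i) < λ_t(j) and λ_{t+1}(i) > λ_{t+1}(j), i.e., curves i and j cross between elements t and t+1. -/
open Finset

/-- `Compatible b L` : the layout `L` respects the bin assignment `b`. -/
def Compatible {m n : ℕ} (b : Fin m → Fin n → ℕ) (L : Fin n → Equiv.Perm (Fin m)) : Prop :=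
  ∀ i j : Fin m, ∀ k : Fin n, b i k < b j k → L k i < L k j

/-- Curves `i` and `j` cross between elements `k` and `k+1`. -/
def CrossAt {m n : ℕ} (L : Fin n → Equiv.Perm (Fin m)) (i j : Fin m) (k : Fin n) : Prop :=
  ∃ h : (k : ℕ) + 1 < n,
    (L k i < L k j ∧ L ⟨(k : ℕ) + 1, h⟩ j < L ⟨(k : ℕ) + 1, h⟩ i) ∨
    (L k j < L k i ∧ L ⟨(k : ℕ) + 1, h⟩ i < L ⟨(k : ℕ) + 1, h⟩ j)

instance {m n : ℕ} (L : Fin n → Equiv.Perm (Fin m)) (i j : Fin m) :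
    DecidablePred (CrossAt L i j) := fun k => by unfold CrossAt; infer_instance

/-- Number of crossings of curves `i` and `j` in layout `L`. -/
def crossCount {m n : ℕ} (L : Fin n → Equiv.Perm (Fin m)) (i j : Fin m) : ℕ :=
  (univ.filter (CrossAt L i j)).card

/-- Alternation pairs of curves `i` and `j` under bin assignment `b`. -/
def AltPair {m n : ℕ} (b : Fin m → Fin n → ℕ) (i j : Fin m) (p : Fin n × Fin n) : Prop :=
  p.1 < p.2 ∧ (∀ t : Fin n, p.1 < t → t < p.2 → b i t = b j t) ∧
    ((b i p.1 < b j p.1 ∧ b j p.2 < b i p.2) ∨ (b j p.1 < b i p.1 ∧ b i p.2 < b j p.2))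

instance {m n : ℕ} (b : Fin m → Fin n → ℕ) (i j : Fin m) :
    DecidablePred (AltPair b i j) := fun p => by unfold AltPair; infer_instance

/-- Alternation number of curves `i` and `j`. -/
def altCount {m n : ℕ} (b : Fin m → Fin n → ℕ) (i j : Fin m) : ℕ :=
  (univ.filter (AltPair b i j)).card

/-- Total crossing number of layout `L` (sum over unordered pairs of curves). -/
def totalCross {m n : ℕ} (L : Fin n → Equiv.Perm (Fin m)) : ℕ :=
  ∑ p ∈ univ.filter (fun p : Fin m × Fin m => p.1 < p.2), crossCount L p.1 p.2

/-- Total wiggle of layout `L`. -/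
def totalWiggle {m n : ℕ} (L : Fin n → Equiv.Perm (Fin m)) : ℤ :=
  ∑ k : Fin n, ∑ i : Fin m,
    if h : (k : ℕ) + 1 < n then
      |((L ⟨(k : ℕ) + 1, h⟩ i : ℕ) : ℤ) - ((L k i : ℕ) : ℤ)| else 0

/-!
Compatibility puts `i` below `j` at `k` and above `j` at `k'`. Being below `j` therefore
cannot persist through every step from `k` to `k'`; where it first fails, `i` is strictly above
`j`, since two curves never share a position.
-/

theorem exists_mem_Ico_and_not_succ {ι : Type*} [PartialOrder ι] [SuccOrder ι]
    [IsSuccArchimedean ι] {p : ι → Prop} {a b : ι} (hab : a ≤ b) (ha : p a) (hb : ¬p b) :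
    ∃ t ∈ Set.Ico a b, p t ∧ ¬p (Order.succ t) := by
  by_contra! p_succ
  have p_of_le : ∀ t, a ≤ t → t ≤ b → p t := by
    intro t hat
    induction hat using Succ.rec with
    | rfl => exact fun _ => ha
    | succ t hat ih =>
      intro hsucc
      have htb : t ≤ b := (Order.le_succ t).trans hsucc
      rcases htb.eq_or_lt with rfl | htb'
      · rw [hsucc.antisymm (Order.le_succ t)]
        exact ih htb
      · exact p_succ t ⟨hat, htb'⟩ (ih htb)
  exact hb (p_of_le b hab le_rfl)

theorem orderSucc_eq_mk_add_one {n : ℕ} (t : Fin n) (ht : (t : ℕ) + 1 < n) :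
    Order.succ t = ⟨(t : ℕ) + 1, ht⟩ := by
  obtain _ | n := n
  · exact t.elim0
  · exact Fin.orderSucc_castSucc ⟨t, Nat.succ_lt_succ_iff.mp ht⟩

theorem necessary_crossing_general {ι κ α β : Type*} [PartialOrder ι] [SuccOrder ι]
    [IsSuccArchimedean ι] [LinearOrder α] [LT β] (b : κ → ι → β) (pos : ι → κ → α)
    (pos_injective : ∀ t, Function.Injective (pos t))
    (pos_compatible : ∀ i j t, b i t < b j t → pos t i < pos t j)
    {i j : κ} {k k' : ι} (hkk' : k ≤ k') (hk : b i k < b j k) (hk' : b j k' < b i k') :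
    ∃ t ∈ Set.Ico k k', pos t i < pos t j ∧ pos (Order.succ t) j < pos (Order.succ t) i := by
  have start_lt : pos k i < pos k j := pos_compatible i j k hk
  have end_lt : pos k' j < pos k' i := pos_compatible j i k' hk'
  have ne : j ≠ i := fun h => start_lt.ne' (congrArg (pos k) h)
  obtain ⟨t, mem_Ico, ht, hsucc⟩ :=
    exists_mem_Ico_and_not_succ (p := fun t => pos t i < pos t j) hkk' start_lt end_lt.not_gt
  exact ⟨t, mem_Ico, ht, (not_lt.mp hsucc).lt_of_ne ((pos_injective _).ne ne)⟩

theorem necessary_crossing {m n : ℕ} (hm : 0 < m) (hn : 0 < n)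
    (b : Fin m → Fin n → ℕ) (L : Fin n → Equiv.Perm (Fin m))
    (hL : Compatible b L) (i j : Fin m) (hij : i ≠ j)
    (k k' : Fin n) (hkk' : k < k')
    (h1 : b i k < b j k) (h2 : b j k' < b i k') :
    ∃ t : Fin n, k ≤ t ∧ t < k' ∧ ∃ ht : (t : ℕ) + 1 < n,
      L t i < L t j ∧ L ⟨(t : ℕ) + 1, ht⟩ j < L ⟨(t : ℕ) + 1, ht⟩ i := by
  obtain ⟨t, ⟨hkt, htk'⟩, hcross⟩ :=
    necessary_crossing_general b (L · ·) (fun t => (L t).injective) hL hkk'.le h1 h2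
  have ht : (t : ℕ) + 1 < n := by omega
  exact ⟨t, hkt, htk', ht, orderSucc_eq_mk_add_one t ht ▸ hcross⟩
end

section
/- For every layout Λ compatible with the bin assignment b and every pair of distinct curves i ≠ j, the number cross(Λ,i,j) of indices k at which curves i and j cross between elements k and k+1 is at least the alternation number alt(i,j). -/
open Finset

/-!
Alternation pairs are consecutive elements of the set of places where the two curves lie in
different bins, so the half-open intervals they span are pairwise disjoint. Compatibility forces the
vertical order of the curves to differ at the two ends of such an interval, so the order flips at
some step inside it. Each alternation pair thus has a crossing of its own.
-/

section Order

variable {α : Type*}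

/-- The elements `a` and `b` of `S` have no further element of `S` strictly between them. This is
how the two places of an alternation sit among the places where two curves are in different bins.
`a < b` is not part of the definition: where it matters, it comes from a point of `Set.Ico a b`. -/
structure ConsecutiveIn [Preorder α] (S : Set α) (a b : α) : Prop where
  left_mem : a ∈ S
  right_mem : b ∈ S
  notMem_of_mem_Ioo {t : α} (ht : t ∈ Set.Ioo a b) : t ∉ S

namespace ConsecutiveIn

variable [LinearOrder α] {S : Set α} {a b c d t : α}

theorem le_left (h : ConsecutiveIn S a b) (hc : c ∈ S) (hcb : c < b) : c ≤ a :=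
  le_of_not_gt fun hac ↦ h.notMem_of_mem_Ioo ⟨hac, hcb⟩ hc

theorem right_le (h : ConsecutiveIn S a b) (hc : c ∈ S) (hac : a < c) : b ≤ c :=
  le_of_not_gt fun hcb ↦ h.notMem_of_mem_Ioo ⟨hac, hcb⟩ hc

theorem eq_and_eq_of_mem_Ico (hab : ConsecutiveIn S a b) (hcd : ConsecutiveIn S c d)
    (htab : t ∈ Set.Ico a b) (htcd : t ∈ Set.Ico c d) : a = c ∧ b = d := by
  have had : a < d := htab.1.trans_lt htcd.2
  have hcb : c < b := htcd.1.trans_lt htab.2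
  exact ⟨(hcd.le_left hab.left_mem had).antisymm (hab.le_left hcd.left_mem hcb),
    (hab.right_le hcd.right_mem had).antisymm (hcd.right_le hab.right_mem hcb)⟩

end ConsecutiveIn

theorem exists_covBy_apply_ne [PartialOrder α] [LocallyFiniteOrder α] {β : Type*} {f : α → β}
    {a b : α} (hab : a ≤ b) (hf : f a ≠ f b) :
    ∃ s t, a ≤ s ∧ s ⋖ t ∧ t ≤ b ∧ f s ≠ f t := by
  induction le_iff_reflTransGen_covBy.mp hab with
  | refl => exact absurd rfl hf
  | @tail c d hac hcd ih =>
    have hac : a ≤ c := le_iff_reflTransGen_covBy.mpr hac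
    by_cases hfc : f a = f c
    · exact ⟨c, d, hac, hcd, le_rfl, hfc ▸ hf⟩
    · obtain ⟨s, t, has, hst, htc, hne⟩ := ih hac hfc
      exact ⟨s, t, has, hst, htc.trans hcd.le, hne⟩

end Order

section Layout

variable {m n : ℕ} {b : Fin m → Fin n → ℕ} {L : Fin n → Equiv.Perm (Fin m)} {i j : Fin m}
  {p : Fin n × Fin n}

theorem crossAt_of_covBy (hij : i ≠ j) {s t : Fin n} (hst : s ⋖ t)
    (hne : (L s i < L s j) ≠ (L t i < L t j)) : CrossAt L i j s := by
  obtain ⟨t, htn⟩ := t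
  obtain rfl : (s : ℕ) + 1 = t := Nat.covBy_iff_add_one_eq.mp (Fin.covBy_iff.mp hst)
  have hpos (k : Fin n) : L k i ≠ L k j := (L k).injective.ne hij
  refine ⟨htn, ?_⟩
  rcases (hpos s).lt_or_gt with hs | hs <;> rcases (hpos ⟨s + 1, htn⟩).lt_or_gt with ht | ht
  · exact absurd (propext (iff_of_true hs ht)) hne
  · exact .inl ⟨hs, ht⟩
  · exact .inr ⟨hs, ht⟩
  · exact absurd (propext (iff_of_false hs.not_gt ht.not_gt)) hne

namespace AltPair

theorem consecutiveIn (hp : AltPair b i j p) :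
    ConsecutiveIn {k | b i k ≠ b j k} p.1 p.2 := by
  obtain ⟨-, heq, ⟨hlt, hgt⟩ | ⟨hgt, hlt⟩⟩ := hp
  · exact ⟨hlt.ne, hgt.ne', fun ht ↦ not_not.mpr (heq _ ht.1 ht.2)⟩
  · exact ⟨hgt.ne', hlt.ne, fun ht ↦ not_not.mpr (heq _ ht.1 ht.2)⟩

theorem ne (hp : AltPair b i j p) : i ≠ j := fun hij ↦
  hp.consecutiveIn.left_mem (congrArg (b · p.1) hij)

theorem layout_lt_ne (hp : AltPair b i j p) (hL : Compatible b L) :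
    (L p.1 i < L p.1 j) ≠ (L p.2 i < L p.2 j) := by
  obtain ⟨-, -, ⟨hlt, hgt⟩ | ⟨hgt, hlt⟩⟩ := hp <;>
    exact fun h ↦ (hL j i _ hgt).not_gt (h ▸ hL i j _ hlt)

theorem exists_crossAt_mem_Ico (hp : AltPair b i j p) (hL : Compatible b L) :
    ∃ k, CrossAt L i j k ∧ k ∈ Set.Ico p.1 p.2 := by
  obtain ⟨s, t, hs, hst, ht, hne⟩ :=
    exists_covBy_apply_ne (f := fun k ↦ L k i < L k j) hp.1.le (hp.layout_lt_ne hL)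
  exact ⟨s, crossAt_of_covBy hp.ne hst hne, hs, hst.lt.trans_le ht⟩

end AltPair

end Layout

theorem crossings_ge_alternations {m n : ℕ} (hm : 0 < m) (hn : 0 < n)
    (b : Fin m → Fin n → ℕ) (L : Fin n → Equiv.Perm (Fin m))
    (hL : Compatible b L) (i j : Fin m) (hij : i ≠ j) :
    altCount b i j ≤ crossCount L i j := by
  refine card_le_card_of_forall_subsingleton (fun p k ↦ k ∈ Set.Ico p.1 p.2) ?_ ?_
  · intro p hp
    obtain ⟨k, hcross, hk⟩ := (mem_filter_univ p).mp hp |>.exists_crossAt_mem_Ico hL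
    exact ⟨k, (mem_filter_univ k).mpr hcross, hk⟩
  · rintro k - p ⟨hp, hkp⟩ q ⟨hq, hkq⟩
    have hp : AltPair b i j p := (mem_filter_univ p).mp hp
    have hq : AltPair b i j q := (mem_filter_univ q).mp hq
    exact Prod.ext_iff.mpr (hp.consecutiveIn.eq_and_eq_of_mem_Ico hq.consecutiveIn hkp hkq)
end

section
/- For every layout Λ compatible with the bin assignment b, the total crossing number of Λ is at least Σ_{1 ≤ i < j ≤ m} alt(i,j). -/
open Finset

/-! Along an alternation of two curves their vertical order is reversed, so by a discrete
intermediate value argument they cross somewhere in the half-open interval that the alternation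
spans. The two ends of an alternation are consecutive elements at which the curves lie in different
bins, so these intervals are disjoint and distinct alternations get distinct crossings. -/

section Order

variable {α β : Type*}

theorem exists_covBy_map_ne_of_map_ne [PartialOrder α] [SuccOrder α] [IsSuccArchimedean α]
    {f : α → β} {a b : α} (hab : a ≤ b) (hf : f a ≠ f b) :
    ∃ t ∈ Set.Ico a b, ∃ u, t ⋖ u ∧ f t ≠ f u := by
  induction hab using Succ.rec with
  | rfl => exact absurd rfl hf
  | succ c hac ih =>
    by_cases hc : f a = f c
    · have hmax : ¬IsMax c := fun hmax ↦ hf (by rwa [hmax.succ_eq])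
      exact ⟨c, ⟨hac, Order.lt_succ_of_not_isMax hmax⟩, Order.succ c,
        Order.covBy_succ_of_not_isMax hmax, hc ▸ hf⟩
    · obtain ⟨t, ht, u, htu, hne⟩ := ih hc
      exact ⟨t, Set.Ico_subset_Ico_right (Order.le_succ c) ht, u, htu, hne⟩

variable [LinearOrder α] {s : Set α} {a b c d t : α}

theorem left_le_and_le_right_of_disjoint_Ioo (hs : Disjoint (Set.Ioo a b) s) (hc : c ∈ s)
    (hd : d ∈ s) (hab : t ∈ Set.Ico a b) (hcd : t ∈ Set.Ico c d) : c ≤ a ∧ b ≤ d := by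
  refine ⟨not_lt.1 fun hac ↦ ?_, not_lt.1 fun hdb ↦ ?_⟩
  · exact hs.notMem_of_mem_left ⟨hac, hcd.1.trans_lt hab.2⟩ hc
  · exact hs.notMem_of_mem_left ⟨hab.1.trans_lt hcd.2, hdb⟩ hd

theorem eq_and_eq_of_disjoint_Ioo_of_mem_Ico (ha : a ∈ s) (hb : b ∈ s)
    (hab : Disjoint (Set.Ioo a b) s) (hc : c ∈ s) (hd : d ∈ s) (hcd : Disjoint (Set.Ioo c d) s)
    (htab : t ∈ Set.Ico a b) (htcd : t ∈ Set.Ico c d) : a = c ∧ b = d := by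
  obtain ⟨hca, hbd⟩ := left_le_and_le_right_of_disjoint_Ioo hab hc hd htab htcd
  obtain ⟨hac, hdb⟩ := left_le_and_le_right_of_disjoint_Ioo hcd ha hb htcd htab
  exact ⟨hac.antisymm hca, hbd.antisymm hdb⟩

end Order

section Layout

variable {m n : ℕ} {b : Fin m → Fin n → ℕ} {L : Fin n → Equiv.Perm (Fin m)} {i j : Fin m}

theorem crossAt_iff_of_covBy {t u : Fin n} (htu : t ⋖ u) :
    CrossAt L i j t ↔ ¬(L t i < L t j ↔ L u i < L u j) := by
  have hu : (t : ℕ) + 1 = u := by simpa using htu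
  have ht : (t : ℕ) + 1 < n := hu ▸ u.isLt
  obtain rfl : u = ⟨t + 1, ht⟩ := Fin.ext hu.symm
  rcases eq_or_ne i j with rfl | hij
  · simp [CrossAt]
  · have hne (k : Fin n) : L k i ≠ L k j := (L k).injective.ne hij
    grind [CrossAt]

namespace AltPair

variable {p q : Fin n × Fin n} {t : Fin n}

theorem bin_ne_fst (hp : AltPair b i j p) : b i p.1 ≠ b j p.1 :=
  hp.2.2.elim (fun h ↦ h.1.ne) (fun h ↦ h.1.ne')

theorem bin_ne_snd (hp : AltPair b i j p) : b i p.2 ≠ b j p.2 :=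
  hp.2.2.elim (fun h ↦ h.2.ne') (fun h ↦ h.2.ne)

theorem disjoint_Ioo_bin_ne (hp : AltPair b i j p) :
    Disjoint (Set.Ioo p.1 p.2) {t | b i t ≠ b j t} :=
  Set.disjoint_left.2 fun t ht hne ↦ hne (hp.2.1 t ht.1 ht.2)

theorem eq_of_mem_Ico (hp : AltPair b i j p) (hq : AltPair b i j q)
    (htp : t ∈ Set.Ico p.1 p.2) (htq : t ∈ Set.Ico q.1 q.2) : p = q :=
  Prod.ext_iff.2 <| eq_and_eq_of_disjoint_Ioo_of_mem_Ico hp.bin_ne_fst hp.bin_ne_snd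
    hp.disjoint_Ioo_bin_ne hq.bin_ne_fst hq.bin_ne_snd hq.disjoint_Ioo_bin_ne htp htq

theorem not_layout_lt_iff (hp : AltPair b i j p) (hL : Compatible b L) :
    ¬(L p.1 i < L p.1 j ↔ L p.2 i < L p.2 j) := by
  obtain ⟨-, -, ⟨hfst, hsnd⟩ | ⟨hfst, hsnd⟩⟩ := hp
  · exact fun h ↦ (hL _ _ _ hsnd).asymm (h.1 (hL _ _ _ hfst))
  · exact fun h ↦ (hL _ _ _ hfst).asymm (h.2 (hL _ _ _ hsnd))

theorem exists_crossAt (hp : AltPair b i j p) (hL : Compatible b L) :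
    ∃ t ∈ Set.Ico p.1 p.2, CrossAt L i j t := by
  obtain ⟨t, ht, u, htu, hne⟩ := exists_covBy_map_ne_of_map_ne (f := fun k ↦ L k i < L k j)
    hp.1.le fun h ↦ hp.not_layout_lt_iff hL (iff_of_eq h)
  exact ⟨t, ht, (crossAt_iff_of_covBy htu).2 fun h ↦ hne (propext h)⟩

end AltPair

theorem altCount_le_crossCount (hL : Compatible b L) (i j : Fin m) :
    altCount b i j ≤ crossCount L i j := by
  refine card_le_card_of_forall_subsingleton (fun p t ↦ t ∈ Set.Ico p.1 p.2) (fun p hp ↦ ?_)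
    fun t _ p hp q hq ↦ ?_
  · obtain ⟨t, ht, hcross⟩ := (mem_filter_univ p).1 hp |>.exists_crossAt hL
    exact ⟨t, (mem_filter_univ t).2 hcross, ht⟩
  · exact ((mem_filter_univ p).1 hp.1).eq_of_mem_Ico ((mem_filter_univ q).1 hq.1) hp.2 hq.2

end Layout

theorem totalCross_ge_sum_alt {m n : ℕ} (hm : 0 < m) (hn : 0 < n)
    (b : Fin m → Fin n → ℕ) (L : Fin n → Equiv.Perm (Fin m))
    (hL : Compatible b L) :
    ∑ p ∈ univ.filter (fun p : Fin m × Fin m => p.1 < p.2), altCount b p.1 p.2 ≤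
      totalCross L :=
  sum_le_sum fun p _ ↦ altCount_le_crossCount hL p.1 p.2
end

section
/- For every bin assignment b there exists a layout Λ compatible with b such that cross(Λ,i,j) = alt(i,j) for every pair of distinct curves i ≠ j. -/
open Finset

/-!
At element `k`, stack the curves lexicographically by their bins read in the order `k, k - 1, …, 0`,
and then by all their bins read forwards. Two curves are thus ordered by their latest difference up
to `k` or, if there is none yet, by their first difference to come. Hence the order at `k + 1` is
the order at `k` stably sorted by the bins at `k + 1`, and two curves cross only if these bins force
them to. If the curves have differed before, their latest difference forms an alternation with
`k + 1`. If they have not, `k + 1` is their first difference, so they were already ordered by it at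
`k` and do not cross.
-/

section BinHistory

variable {κ α : Type*} [LinearOrder κ] {f g : κ → α} {k k' : κ}

/-- The values of `f` up to `k`, ordered colexicographically: the latest difference decides. -/
def binHistory (f : κ → α) (k : κ) : Colex (Set.Iic k → α) :=
  toColex fun t => f t

theorem binHistory_eq_iff : binHistory f k = binHistory g k ↔ ∀ t ≤ k, f t = g t := by
  simp only [binHistory, toColex_inj, funext_iff, Subtype.forall, Set.mem_Iic]

theorem binHistory_eq_iff_of_covBy (hk : k ⋖ k') :
    binHistory f k' = binHistory g k' ↔ f k' = g k' ∧ binHistory f k = binHistory g k := by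
  simp only [binHistory_eq_iff, le_iff_eq_or_lt (b := k'), hk.lt_iff_le_left, forall_eq_or_imp]

variable [LT α]

theorem binHistory_lt_iff :
    binHistory f k < binHistory g k ↔
      ∃ p ≤ k, (∀ t, p < t → t ≤ k → f t = g t) ∧ f p < g p := by
  constructor
  · rintro ⟨⟨p, hpk⟩, heq, hlt⟩
    exact ⟨p, hpk, fun t hpt htk => heq ⟨t, htk⟩ hpt, hlt⟩
  · rintro ⟨p, hpk, heq, hlt⟩
    exact ⟨⟨p, hpk⟩, fun t hpt => heq t hpt t.2, hlt⟩

theorem binHistory_lt_of_lt (h : f k < g k) : binHistory f k < binHistory g k :=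
  binHistory_lt_iff.2 ⟨k, le_rfl, fun _ hkt htk => absurd hkt htk.not_gt, h⟩

theorem binHistory_lt_iff_of_covBy (hk : k ⋖ k') :
    binHistory f k' < binHistory g k' ↔
      f k' < g k' ∨ f k' = g k' ∧ binHistory f k < binHistory g k := by
  constructor
  · intro h
    obtain ⟨p, hpk', heq, hlt⟩ := binHistory_lt_iff.1 h
    obtain rfl | hpk' := hpk'.eq_or_lt
    · exact .inl hlt
    · exact .inr ⟨heq k' hpk' le_rfl, binHistory_lt_iff.2
        ⟨p, hk.le_of_lt hpk', fun t hpt htk => heq t hpt (htk.trans hk.le), hlt⟩⟩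
  · rintro (hlt | ⟨heq', h⟩)
    · exact binHistory_lt_of_lt hlt
    · obtain ⟨p, hpk, heq, hlt⟩ := binHistory_lt_iff.1 h
      refine binHistory_lt_iff.2 ⟨p, hpk.trans hk.le, fun t hpt htk' => ?_, hlt⟩
      obtain rfl | htk' := htk'.eq_or_lt
      · exact heq'
      · exact heq t hpt (hk.le_of_lt htk')

end BinHistory

section StackKey

variable {ι κ α : Type*} [LinearOrder κ] {b : ι → κ → α} {i j : ι} {k k' : κ}

/-- The sort key that determines the vertical position of curve `i` at element `k`: the bins of `i`
from `k` backwards, then all its bins forwards, then `i` itself to break the remaining ties. -/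
def stackKey (b : ι → κ → α) (k : κ) (i : ι) :
    Colex (Set.Iic k → α) ×ₗ Lex (κ → α) ×ₗ ι :=
  toLex (binHistory (b i) k, toLex (toLex (b i), i))

theorem stackKey_injective (b : ι → κ → α) (k : κ) : Function.Injective (stackKey b k) :=
  fun _ _ h => congrArg (fun x => (ofLex (ofLex x).2).2) h

variable [PartialOrder ι] [PartialOrder α]

theorem stackKey_lt_iff :
    stackKey b k i < stackKey b k j ↔
      binHistory (b i) k < binHistory (b j) k ∨ binHistory (b i) k = binHistory (b j) k ∧
        toLex (toLex (b i), i) < toLex (toLex (b j), j) :=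
  Prod.Lex.toLex_lt_toLex

theorem stackKey_lt_of_bin_lt (h : b i k < b j k) : stackKey b k i < stackKey b k j :=
  stackKey_lt_iff.2 (.inl (binHistory_lt_of_lt h))

theorem stackKey_lt_of_first_bin_lt (hk : k < k') (heq : ∀ t < k', b i t = b j t)
    (hlt : b i k' < b j k') : stackKey b k i < stackKey b k j :=
  stackKey_lt_iff.2 <| .inr ⟨binHistory_eq_iff.2 fun t htk => heq t (htk.trans_lt hk),
    Prod.Lex.toLex_lt_toLex.2 (.inl ⟨k', heq, hlt⟩)⟩

theorem stackKey_lt_iff_of_covBy (hk : k ⋖ k') :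
    stackKey b k' i < stackKey b k' j ↔
      b i k' < b j k' ∨ b i k' = b j k' ∧ stackKey b k i < stackKey b k j := by
  rw [stackKey_lt_iff, stackKey_lt_iff, binHistory_lt_iff_of_covBy hk,
    binHistory_eq_iff_of_covBy hk]
  tauto

theorem stackKey_lt_and_gt_iff_of_covBy (hk : k ⋖ k') :
    stackKey b k i < stackKey b k j ∧ stackKey b k' j < stackKey b k' i ↔
      binHistory (b i) k < binHistory (b j) k ∧ b j k' < b i k' := by
  constructor
  · rintro ⟨hlt, hgt⟩
    have hbin : b j k' < b i k' := by
      obtain hbin | ⟨-, hgt⟩ := (stackKey_lt_iff_of_covBy hk).1 hgt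
      · exact hbin
      · exact absurd hlt hgt.asymm
    obtain hhist | ⟨hhist, -⟩ := stackKey_lt_iff.1 hlt
    · exact ⟨hhist, hbin⟩
    · have heq : ∀ t < k', b j t = b i t := fun t ht =>
        (binHistory_eq_iff.1 hhist t (hk.le_of_lt ht)).symm
      exact absurd hlt (stackKey_lt_of_first_bin_lt hk.lt heq hbin).asymm
  · rintro ⟨hhist, hbin⟩
    exact ⟨stackKey_lt_iff.2 (.inl hhist), stackKey_lt_of_bin_lt hbin⟩

end StackKey

theorem sort_symm_lt_sort_symm_iff {m : ℕ} {β : Type*} [LinearOrder β] {f : Fin m → β}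
    (hf : Function.Injective f) {i j : Fin m} :
    (Tuple.sort f).symm i < (Tuple.sort f).symm j ↔ f i < f j := by
  have hmono : StrictMono (f ∘ Tuple.sort f) :=
    (Tuple.monotone_sort f).strictMono_of_injective (hf.comp (Tuple.sort f).injective)
  simpa using (hmono.lt_iff_lt (a := (Tuple.sort f).symm i) (b := (Tuple.sort f).symm j)).symm

section Layout

variable {m n : ℕ} {b : Fin m → Fin n → ℕ} {i j : Fin m} {k p p' q : Fin n}

/-- The layout that stacks the curves at each element `k` in the order of `stackKey b k`. -/
noncomputable def stackLayout (b : Fin m → Fin n → ℕ) (k : Fin n) : Equiv.Perm (Fin m) :=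
  (Tuple.sort (stackKey b k)).symm

theorem stackLayout_lt_iff :
    stackLayout b k i < stackLayout b k j ↔ stackKey b k i < stackKey b k j :=
  sort_symm_lt_sort_symm_iff (stackKey_injective b k)

theorem compatible_stackLayout (b : Fin m → Fin n → ℕ) : Compatible b (stackLayout b) :=
  fun _ _ _ h => stackLayout_lt_iff.2 (stackKey_lt_of_bin_lt h)

theorem AltPair.fst_unique (h : AltPair b i j (p, q)) (h' : AltPair b i j (p', q)) : p = p' := by
  obtain ⟨hpq, heq, hne⟩ := h
  obtain ⟨hpq', heq', hne'⟩ := h'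
  dsimp only at hpq heq hne hpq' heq' hne'
  obtain hlt | rfl | hlt := lt_trichotomy p p'
  · have := heq p' hlt hpq'
    omega
  · rfl
  · have := heq' p hlt hpq
    omega

theorem exists_altPair_iff_of_covBy (hk : k ⋖ q) :
    (∃ p, AltPair b i j (p, q)) ↔
      (binHistory (b i) k < binHistory (b j) k ∧ b j q < b i q) ∨
      (binHistory (b j) k < binHistory (b i) k ∧ b i q < b j q) := by
  simp only [AltPair, binHistory_lt_iff, ← hk.lt_iff_le_left, eq_comm (a := b j _)]
  grind

theorem crossAt_stackLayout_iff :
    CrossAt (stackLayout b) i j k ↔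
      ∃ h : (k : ℕ) + 1 < n, ∃ p, AltPair b i j (p, ⟨k + 1, h⟩) := by
  refine exists_congr fun h => ?_
  have hk : k ⋖ ⟨k + 1, h⟩ := Fin.covBy_iff.2 (Order.covBy_add_one _)
  simp only [stackLayout_lt_iff, stackKey_lt_and_gt_iff_of_covBy hk, exists_altPair_iff_of_covBy hk]

theorem image_succ_crossAt_eq_image_snd_altPair (b : Fin m → Fin n → ℕ) (i j : Fin m) :
    (univ.filter (CrossAt (stackLayout b) i j)).image (fun k : Fin n => (k : ℕ) + 1) =
      (univ.filter (AltPair b i j)).image (fun x => (x.2 : ℕ)) := by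
  ext q
  simp only [mem_image, mem_filter_univ, crossAt_stackLayout_iff]
  constructor
  · rintro ⟨k, ⟨hk, p, hp⟩, rfl⟩
    exact ⟨(p, ⟨k + 1, hk⟩), hp, rfl⟩
  · rintro ⟨⟨p, q⟩, h, rfl⟩
    have hpq : (p : ℕ) < q := h.1
    have hq : (q : ℕ) - 1 + 1 = q := by omega
    exact ⟨⟨q - 1, by omega⟩, ⟨by simp only [hq, q.2], p, by simpa only [hq] using h⟩, hq⟩

theorem crossCount_stackLayout (b : Fin m → Fin n → ℕ) (i j : Fin m) :
    crossCount (stackLayout b) i j = altCount b i j := by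
  have succ_injective : Function.Injective fun k : Fin n => (k : ℕ) + 1 :=
    Nat.succ_injective.comp Fin.val_injective
  have snd_injOn :
      Set.InjOn (fun x : Fin n × Fin n => (x.2 : ℕ)) (univ.filter (AltPair b i j)) := by
    rintro ⟨p, q⟩ h ⟨p', q'⟩ h' heq
    obtain rfl : q = q' := Fin.ext heq
    simp only [coe_filter_univ, Set.mem_ofPred_eq] at h h'
    rw [h.fst_unique h']
  rw [crossCount, altCount, ← card_image_of_injective _ succ_injective,
    image_succ_crossAt_eq_image_snd_altPair, card_image_of_injOn snd_injOn]

end Layout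

theorem exists_layout_achieving_alt {m n : ℕ} (hm : 0 < m) (hn : 0 < n)
    (b : Fin m → Fin n → ℕ) :
    ∃ L : Fin n → Equiv.Perm (Fin m), Compatible b L ∧
      ∀ i j : Fin m, i ≠ j → crossCount L i j = altCount b i j :=
  ⟨stackLayout b, compatible_stackLayout b, fun i j _ => crossCount_stackLayout b i j⟩
end

section
/- For every bin assignment b, the minimum of the total crossing number over all layouts compatible with b equals Σ_{1 ≤ i < j ≤ m} alt(i,j). (This is the optimality guarantee of Theorem 1: for a given element order, the curve-ordering algorithm computes an order of the set curves with the minimum number of crossings.) -/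
open Finset

/-!
*Lower bound.* Between the two elements of an alternation the curves exchange their order, hence
cross; the half-open intervals spanned by the alternations of a fixed pair are disjoint, so these
crossings are distinct.

*Upper bound.* Stably sort the curves by their bins at elements `1, …, n`, then again at
`n, …, 1`, and use the orders seen during the second pass. If `i` and `j` cross between `k` and
`k + 1`, then they lie in different bins at `k`. Were they in equal bins at every later element,
their order at `k + 1` would be the one left by the first pass, which `k` decided, and there would
be no crossing; so there is a first later element with different bins, and it decides the order at
`k + 1`. Hence each crossing starts an alternation.
-/

section StableSort

variable {m n : ℕ} {α : Type*} [LinearOrder α]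

theorem tuple_sort_symm_lt_symm_iff {f : Fin m → α} {p q : Fin m} :
    (Tuple.sort f).symm p < (Tuple.sort f).symm q ↔ f p < f q ∨ f p = f q ∧ p < q := by
  have hmono := Tuple.eq_sort_iff'.1 (rfl : Tuple.sort f = Tuple.sort f)
  rw [← hmono.lt_iff_lt, Equiv.trans_apply, Equiv.trans_apply, Equiv.apply_symm_apply,
    Equiv.apply_symm_apply]
  exact Prod.Lex.toLex_lt_toLex

/-- The arrangement obtained from `σ` by stably sorting the curves by `f`. Like `L k` in a layout,
a permutation sends a curve to its position. -/
def stableSort (f : Fin m → α) (σ : Equiv.Perm (Fin m)) : Equiv.Perm (Fin m) :=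
  σ.trans (Tuple.sort (f ∘ σ.symm)).symm

theorem stableSort_lt_iff {f : Fin m → α} {σ : Equiv.Perm (Fin m)} {i j : Fin m} :
    stableSort f σ i < stableSort f σ j ↔ f i < f j ∨ f i = f j ∧ σ i < σ j := by
  simp only [stableSort, Equiv.trans_apply, tuple_sort_symm_lt_symm_iff, Function.comp_apply,
    Equiv.symm_apply_apply]

/-- The arrangement after stably sorting `σ` by the bins at the elements before `k`, in increasing
order of the elements. -/
def forwardPass (b : Fin m → Fin n → α) (σ : Equiv.Perm (Fin m)) (k : Fin (n + 1)) :
    Equiv.Perm (Fin m) :=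
  Fin.induction σ (fun t τ => stableSort (b · t) τ) k

/-- The arrangement after stably sorting `σ` by the bins at the elements from `k` on, in decreasing
order of the elements. -/
def backwardPass (b : Fin m → Fin n → α) (σ : Equiv.Perm (Fin m)) (k : Fin (n + 1)) :
    Equiv.Perm (Fin m) :=
  Fin.reverseInduction σ (fun t τ => stableSort (b · t) τ) k

variable {b : Fin m → Fin n → α} {σ : Equiv.Perm (Fin m)} {i j : Fin m}

theorem forwardPass_succ_lt_iff {k : Fin n} :
    forwardPass b σ k.succ i < forwardPass b σ k.succ j ↔
      b i k < b j k ∨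
        b i k = b j k ∧ forwardPass b σ k.castSucc i < forwardPass b σ k.castSucc j :=
  stableSort_lt_iff

theorem backwardPass_castSucc_lt_iff {k : Fin n} :
    backwardPass b σ k.castSucc i < backwardPass b σ k.castSucc j ↔
      b i k < b j k ∨ b i k = b j k ∧ backwardPass b σ k.succ i < backwardPass b σ k.succ j := by
  rw [backwardPass, Fin.reverseInduction_castSucc]
  exact stableSort_lt_iff

theorem forwardPass_lt_of_last_ne {k : Fin (n + 1)} {t : Fin n} (htk : t.castSucc < k)
    (heq : ∀ s, t < s → s.castSucc < k → b i s = b j s) (hlt : b i t < b j t) :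
    forwardPass b σ k i < forwardPass b σ k j := by
  induction k using Fin.induction with
  | zero => exact absurd htk (Fin.not_lt_zero _)
  | succ k ih =>
    rw [forwardPass_succ_lt_iff]
    rcases (Fin.castSucc_lt_succ_iff.1 htk).eq_or_lt with rfl | htk'
    · exact Or.inl hlt
    · exact Or.inr ⟨heq k htk' k.castSucc_lt_succ,
        ih htk' fun s hts hsk => heq s hts (hsk.trans k.castSucc_lt_succ)⟩

theorem backwardPass_lt_of_first_ne {k : Fin (n + 1)} {t : Fin n} (hkt : k ≤ t.castSucc)
    (heq : ∀ s, k ≤ s.castSucc → s < t → b i s = b j s) (hlt : b i t < b j t) :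
    backwardPass b σ k i < backwardPass b σ k j := by
  induction k using Fin.reverseInduction with
  | last => exact absurd hkt t.castSucc_lt_last.not_ge
  | cast k ih =>
    rw [backwardPass_castSucc_lt_iff]
    rcases (Fin.castSucc_le_castSucc_iff.1 hkt).eq_or_lt with rfl | hkt'
    · exact Or.inl hlt
    · exact Or.inr ⟨heq k le_rfl hkt',
        ih hkt' fun s hks hst => heq s (k.castSucc_lt_succ.le.trans hks) hst⟩

theorem backwardPass_lt_iff_of_forall_eq {k : Fin (n + 1)}
    (heq : ∀ s : Fin n, k ≤ s.castSucc → b i s = b j s) :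
    backwardPass b σ k i < backwardPass b σ k j ↔ σ i < σ j := by
  induction k using Fin.reverseInduction with
  | last => rw [backwardPass, Fin.reverseInduction_last]
  | cast k ih =>
    have hk : b i k = b j k := heq k le_rfl
    rw [backwardPass_castSucc_lt_iff, ← ih fun s hks => heq s (k.castSucc_lt_succ.le.trans hks)]
    simp only [hk, lt_irrefl, false_or, true_and]

theorem exists_first_ne_of_backwardPass_lt {k : Fin n} (hlt : b i k < b j k)
    (hgt : backwardPass b (forwardPass b σ (Fin.last n)) k.succ j <
      backwardPass b (forwardPass b σ (Fin.last n)) k.succ i) :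
    ∃ t, k < t ∧ (∀ s, k < s → s < t → b i s = b j s) ∧ b j t < b i t := by
  by_cases hne : ∃ t, k < t ∧ b i t ≠ b j t
  · obtain ⟨t, ⟨hkt, hne_t⟩, hmin⟩ := WellFounded.has_min wellFounded_lt
      {t | k < t ∧ b i t ≠ b j t} hne
    have heq : ∀ s, k < s → s < t → b i s = b j s := fun s hks hst =>
      not_not.1 fun hne_s => hmin s ⟨hks, hne_s⟩ hst
    exact ⟨t, hkt, heq, hne_t.lt_or_gt.resolve_left fun hlt_t =>
      hgt.not_gt (backwardPass_lt_of_first_ne hkt heq hlt_t)⟩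
  · push Not at hne
    have hforward : forwardPass b σ (Fin.last n) i < forwardPass b σ (Fin.last n) j :=
      forwardPass_lt_of_last_ne k.castSucc_lt_last (fun s hks _ => hne s hks) hlt
    exact absurd ((backwardPass_lt_iff_of_forall_eq hne).2 hforward) hgt.not_gt

/-- The layout produced by sorting forwards through all elements and then backwards; the forward
pass only serves to break the ties of the backward pass. -/
def twoPassLayout (b : Fin m → Fin n → α) (k : Fin n) : Equiv.Perm (Fin m) :=
  backwardPass b (forwardPass b 1 (Fin.last n)) k.castSucc

end StableSort

section Layout

variable {m n : ℕ} {b : Fin m → Fin n → ℕ} {L : Fin n → Equiv.Perm (Fin m)} {i j : Fin m}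

theorem crossAt_comm {k : Fin n} : CrossAt L i j k ↔ CrossAt L j i k :=
  exists_congr fun _ => or_comm

theorem altPair_comm {p : Fin n × Fin n} : AltPair b i j p ↔ AltPair b j i p := by
  simp only [AltPair, eq_comm (a := b i _), or_comm]

theorem exists_crossAt_of_lt_of_gt {k l : Fin n} (hkl : k ≤ l) (hk : L k i < L k j)
    (hl : L l j < L l i) : ∃ s, k ≤ s ∧ s < l ∧ CrossAt L i j s := by
  obtain ⟨l, hln⟩ := l
  induction l, (show (k : ℕ) ≤ l from hkl) using Nat.le_induction with
  | base => exact absurd hk hl.not_gt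
  | succ l hkl' ih =>
    have hln' : l < n := l.lt_succ_self.trans hln
    rcases lt_or_ge (L ⟨l, hln'⟩ j) (L ⟨l, hln'⟩ i) with hlt | hge
    · obtain ⟨s, hks, hsl, hs⟩ := ih hln' hkl' hlt
      exact ⟨s, hks, hsl.trans l.lt_succ_self, hs⟩
    · have hij : i ≠ j := fun h => hl.ne (h ▸ rfl)
      exact ⟨⟨l, hln'⟩, hkl', l.lt_succ_self, hln,
        Or.inl ⟨hge.lt_of_ne ((L _).injective.ne hij), hl⟩⟩

theorem AltPair.exists_crossAt_s5 (hL : Compatible b L) {p : Fin n × Fin n} (hp : AltPair b i j p) :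
    ∃ s, p.1 ≤ s ∧ s < p.2 ∧ CrossAt L i j s := by
  obtain ⟨hlt, -, h | h⟩ := hp
  · exact exists_crossAt_of_lt_of_gt hlt.le (hL _ _ _ h.1) (hL _ _ _ h.2)
  · simp only [crossAt_comm (i := i)]
    exact exists_crossAt_of_lt_of_gt hlt.le (hL _ _ _ h.1) (hL _ _ _ h.2)

theorem AltPair.fst_ne {p : Fin n × Fin n} (hp : AltPair b i j p) : b i p.1 ≠ b j p.1 :=
  hp.2.2.elim (fun h => h.1.ne) (fun h => h.1.ne')

theorem AltPair.snd_ne {p : Fin n × Fin n} (hp : AltPair b i j p) : b i p.2 ≠ b j p.2 :=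
  hp.2.2.elim (fun h => h.2.ne') (fun h => h.2.ne)

theorem AltPair.fst_le_fst {p q : Fin n × Fin n} (hp : AltPair b i j p) (hq : AltPair b i j q)
    (hpq : p.1 < q.2) : p.1 ≤ q.1 :=
  le_of_not_gt fun h => hp.fst_ne (hq.2.1 _ h hpq)

theorem AltPair.snd_le_snd {p q : Fin n × Fin n} (hp : AltPair b i j p) (hq : AltPair b i j q)
    (hpq : p.1 < q.2) : p.2 ≤ q.2 :=
  le_of_not_gt fun h => hq.snd_ne (hp.2.1 _ hpq h)

theorem AltPair.eq_of_mem_Ico_s5 {p q : Fin n × Fin n} (hp : AltPair b i j p)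
    (hq : AltPair b i j q) {s : Fin n} (hsp : s ∈ Set.Ico p.1 p.2) (hsq : s ∈ Set.Ico q.1 q.2) :
    p = q := by
  have hpq : p.1 < q.2 := hsp.1.trans_lt hsq.2
  have hqp : q.1 < p.2 := hsq.1.trans_lt hsp.2
  exact Prod.ext (le_antisymm (hp.fst_le_fst hq hpq) (hq.fst_le_fst hp hqp))
    (le_antisymm (hp.snd_le_snd hq hpq) (hq.snd_le_snd hp hqp))

theorem compatible_twoPassLayout (b : Fin m → Fin n → ℕ) : Compatible b (twoPassLayout b) :=
  fun _ _ _ hlt => backwardPass_castSucc_lt_iff.2 (Or.inl hlt)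

theorem exists_altPair_of_twoPassLayout_lt_of_gt {k : Fin n} (hk : (k : ℕ) + 1 < n)
    (hlt : twoPassLayout b k i < twoPassLayout b k j)
    (hgt : twoPassLayout b ⟨k + 1, hk⟩ j < twoPassLayout b ⟨k + 1, hk⟩ i) :
    ∃ t, AltPair b i j (k, t) := by
  have hbin : b i k < b j k :=
    (backwardPass_castSucc_lt_iff.1 hlt).resolve_right fun h => hgt.not_gt h.2
  obtain ⟨t, hkt, heq, ht⟩ := exists_first_ne_of_backwardPass_lt hbin hgt
  exact ⟨t, hkt, heq, Or.inl ⟨hbin, ht⟩⟩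

theorem exists_altPair_of_crossAt_twoPassLayout {k : Fin n}
    (hcross : CrossAt (twoPassLayout b) i j k) : ∃ t, AltPair b i j (k, t) := by
  obtain ⟨hk, ⟨hlt, hgt⟩ | ⟨hlt, hgt⟩⟩ := hcross
  · exact exists_altPair_of_twoPassLayout_lt_of_gt hk hlt hgt
  · simp only [altPair_comm (i := i)]
    exact exists_altPair_of_twoPassLayout_lt_of_gt hk hlt hgt

theorem crossCount_twoPassLayout_le_altCount (b : Fin m → Fin n → ℕ) (i j : Fin m) :
    crossCount (twoPassLayout b) i j ≤ altCount b i j := by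
  refine card_le_card_of_forall_subsingleton (fun k p => p.1 = k) ?_ ?_
  · intro k hk
    obtain ⟨t, ht⟩ := exists_altPair_of_crossAt_twoPassLayout ((mem_filter_univ k).1 hk)
    exact ⟨(k, t), (mem_filter_univ _).2 ht, rfl⟩
  · rintro p - k ⟨-, hk⟩ l ⟨-, hl⟩
    exact hk.symm.trans hl

theorem crossCount_twoPassLayout (b : Fin m → Fin n → ℕ) (i j : Fin m) :
    crossCount (twoPassLayout b) i j = altCount b i j :=
  (crossCount_twoPassLayout_le_altCount b i j).antisymm
    (altCount_le_crossCount (compatible_twoPassLayout b) i j)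

end Layout

theorem min_totalCross_eq_sum_alt {m n : ℕ} (hm : 0 < m) (hn : 0 < n)
    (b : Fin m → Fin n → ℕ) :
    IsLeast {c : ℕ | ∃ L : Fin n → Equiv.Perm (Fin m), Compatible b L ∧ totalCross L = c}
      (∑ p ∈ univ.filter (fun p : Fin m × Fin m => p.1 < p.2), altCount b p.1 p.2) := by
  constructor
  · exact ⟨twoPassLayout b, compatible_twoPassLayout b,
      sum_congr rfl fun p _ => crossCount_twoPassLayout b p.1 p.2⟩
  · rintro _ ⟨L, hL, rfl⟩
    exact sum_le_sum fun p _ => altCount_le_crossCount hL p.1 p.2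
end

section
/- Let b be a bin assignment and let i ≠ j be two curves with b(i,k) ≤ b(j,k) for every element k. Then there exists a layout Λ compatible with b that achieves the minimum total crossing number over all compatible layouts and additionally satisfies λ_k(i) < λ_k(j) for every element k (the curve of i stays strictly below the curve of j throughout, reflecting uncertain set containment). -/
open Finset

/-!
If the curves `i` and `j` are out of order at an element, exchange their positions there. This is
compatible, since `i` and `j` must then share a bin. It creates no crossing in total between
consecutive elements: exchanging at both of them only relabels the curves, and exchanging at exactly
one of them removes the crossing of `i` with `j`, while a crossing it creates between one of these
curves and a third curve is paid for by one it removes between the other one and that third curve.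
So applying the exchange to an optimal layout yields an optimal layout in which `i` stays below `j`.
-/

section Inversions

variable {α α' β γ : Type*} [Fintype α] [LinearOrder β] [LinearOrder γ]

/-- The pairs in increasing order under `f` and in decreasing order under `g`, i.e. the pairs of
curves that cross between positions `f` and `g`. Each crossing pair is listed once, with the curve
that is lower under `f` first. -/
def inversions (f : α → β) (g : α → γ) : Finset (α × α) :=
  {p | f p.1 < f p.2 ∧ g p.2 < g p.1}

theorem mem_inversions {f : α → β} {g : α → γ} {p : α × α} :
    p ∈ inversions f g ↔ f p.1 < f p.2 ∧ g p.2 < g p.1 := by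
  simp [inversions]

theorem swap_notMem_inversions {f : α → β} {g : α → γ} {p : α × α} (hp : p ∈ inversions f g) :
    p.swap ∉ inversions f g :=
  fun hp' => (mem_inversions.1 hp).1.asymm (mem_inversions.1 hp').1

theorem card_inversions_comm (f : α → β) (g : α → γ) :
    #(inversions f g) = #(inversions g f) :=
  card_equiv (Equiv.prodComm α α) fun p => by simp [mem_inversions, and_comm]

theorem card_inversions_comp_equiv [Fintype α'] (f : α → β) (g : α → γ) (e : α' ≃ α) :
    #(inversions (f ∘ e) (g ∘ e)) = #(inversions f g) :=
  card_equiv (e.prodCongr e) fun p => by simp [mem_inversions]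

end Inversions

section Uncross

variable {α β γ ω : Type*} [DecidableEq α] [LinearOrder β] [LinearOrder γ]

theorem apply_swap_lt_apply_swap {f : α → β} {g : α → γ} {i j p q : α}
    (hf : f i ≤ f j) (hg : g j ≤ g i) (hfpq : f p < f q) (hgpq : g p ≤ g q)
    (hgswap : g (Equiv.swap i j q) < g (Equiv.swap i j p)) :
    f (Equiv.swap i j p) < f (Equiv.swap i j q) := by
  have hpi : p ≠ i := by grind
  have hqj : q ≠ j := by grind
  calc f (Equiv.swap i j p)
      ≤ f p := by grind
    _ < f q := hfpq
    _ ≤ f (Equiv.swap i j q) := by grind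

theorem card_inversions_comp_swap_le [Fintype α] {f : α → β} {g : α → γ} {i j : α}
    (hf : f i ≤ f j) (hg : g j ≤ g i) :
    #(inversions f (g ∘ Equiv.swap i j)) ≤ #(inversions f g) := by
  rw [← card_sdiff_le_card_sdiff_iff]
  refine card_le_card_of_injOn ((Equiv.swap i j).prodCongr (Equiv.swap i j)) ?_
    (Equiv.injective _).injOn
  rintro ⟨p, q⟩ hpq
  simp only [coe_sdiff, Set.mem_sdiff, mem_coe, mem_inversions, Function.comp_apply, not_and,
    not_lt, Equiv.prodCongr_apply, Prod.map_apply, Equiv.swap_apply_self] at hpq ⊢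
  obtain ⟨⟨hfpq, hgswap⟩, hgpq⟩ := hpq
  exact ⟨⟨apply_swap_lt_apply_swap hf hg hfpq (hgpq hfpq) hgswap, hgswap⟩, fun _ => hgpq hfpq⟩

/-- The positions `e` with those of `i` and `j` exchanged when `j` lies below `i`. -/
def uncross (i j : α) (e : α ≃ β) : α ≃ β :=
  if e j < e i then (Equiv.swap i j).trans e else e

theorem uncross_lt_uncross {i j : α} (hij : i ≠ j) (e : α ≃ β) :
    uncross i j e i < uncross i j e j := by
  unfold uncross
  split_ifs with h
  · simpa using h
  · exact (not_lt.1 h).lt_of_ne (e.injective.ne hij)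

theorem uncross_lt_uncross_of_lt [PartialOrder ω] {w : α → ω} {e : α ≃ β} {i j : α}
    (he : ∀ p q, w p < w q → e p < e q) (hw : w i ≤ w j) {p q : α} (hpq : w p < w q) :
    uncross i j e p < uncross i j e q := by
  unfold uncross
  split_ifs with h
  · have hw' : w i = w j := eq_of_le_of_not_lt hw fun hlt => h.asymm (he i j hlt)
    apply he
    rwa [Equiv.apply_swap_eq_self hw', Equiv.apply_swap_eq_self hw']
  · exact he p q hpq

theorem card_inversions_uncross_le [Fintype α] (i j : α) (e : α ≃ β) (e' : α ≃ γ) :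
    #(inversions (uncross i j e) (uncross i j e')) ≤ #(inversions e e') := by
  unfold uncross
  split_ifs with h h' h'
  · exact (card_inversions_comp_equiv e e' (Equiv.swap i j)).le
  · rw [card_inversions_comm, card_inversions_comm e]
    exact card_inversions_comp_swap_le (not_lt.1 h') h.le
  · exact card_inversions_comp_swap_le (not_lt.1 h) h'.le
  · exact le_rfl

end Uncross

theorem card_filter_lt_and_mem_or_swap_mem {α : Type*} [Fintype α] [LinearOrder α]
    {s : Finset (α × α)} (hs : ∀ p ∈ s, p.swap ∉ s) :
    #{p : α × α | p.1 < p.2 ∧ (p ∈ s ∨ p.swap ∈ s)} = #s := by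
  have hne : ∀ p ∈ s, p.1 ≠ p.2 := by
    rintro ⟨p, q⟩ hp (rfl : p = q)
    exact hs _ hp hp
  have hdisj : Disjoint ({p | p.1 < p.2 ∧ p ∈ s} : Finset (α × α))
      ({p | p.1 < p.2 ∧ p.swap ∈ s} : Finset (α × α)) :=
    disjoint_filter.2 fun p _ hp hp' => hs p hp.2 hp'.2
  have hswap : #{p : α × α | p.1 < p.2 ∧ p.swap ∈ s} = #{p ∈ s | ¬ p.1 < p.2} :=
    card_equiv (Equiv.prodComm α α) fun ⟨p, q⟩ => by
      have := hne (q, p)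
      grind
  calc #{p : α × α | p.1 < p.2 ∧ (p ∈ s ∨ p.swap ∈ s)}
      = #{p : α × α | p.1 < p.2 ∧ p ∈ s} + #{p : α × α | p.1 < p.2 ∧ p.swap ∈ s} := by
        simp only [and_or_left, filter_or, card_union_of_disjoint hdisj]
    _ = #{p ∈ s | p.1 < p.2} + #{p ∈ s | ¬ p.1 < p.2} := by
        rw [hswap]
        congr 2
        grind
    _ = #s := card_filter_add_card_filter_not _

section Layout

variable {m n : ℕ}

theorem crossAt_iff_mem_inversions {L : Fin n → Equiv.Perm (Fin m)} {p : Fin m × Fin m} {k : Fin n}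
    (h : (k : ℕ) + 1 < n) :
    CrossAt L p.1 p.2 k ↔
      p ∈ inversions (L k) (L ⟨k + 1, h⟩) ∨ p.swap ∈ inversions (L k) (L ⟨k + 1, h⟩) := by
  simp [CrossAt, mem_inversions, h]

theorem totalCross_eq_sum_card_inversions (L : Fin n → Equiv.Perm (Fin m)) :
    totalCross L = ∑ k : Fin n,
      if h : (k : ℕ) + 1 < n then #(inversions (L k) (L ⟨k + 1, h⟩)) else 0 := by
  calc totalCross L
      = ∑ k : Fin n, #{p : Fin m × Fin m | p.1 < p.2 ∧ CrossAt L p.1 p.2 k} := by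
        simp only [totalCross, crossCount, ← filter_filter]
        exact sum_card_bipartiteAbove_eq_sum_card_bipartiteBelow _
    _ = _ := sum_congr rfl fun k _ => ?_
  split_ifs with h
  · simp only [crossAt_iff_mem_inversions h]
    exact card_filter_lt_and_mem_or_swap_mem fun _ => swap_notMem_inversions
  · simp [CrossAt, h]

theorem totalCross_uncross_le (i j : Fin m) (L : Fin n → Equiv.Perm (Fin m)) :
    totalCross (fun k => uncross i j (L k)) ≤ totalCross L := by
  simp only [totalCross_eq_sum_card_inversions]
  refine sum_le_sum fun k _ => ?_
  split_ifs with h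
  · exact card_inversions_uncross_le i j _ _
  · exact le_rfl

theorem Compatible.uncross {b : Fin m → Fin n → ℕ} {L : Fin n → Equiv.Perm (Fin m)}
    (hL : Compatible b L) {i j : Fin m} (hsub : ∀ k, b i k ≤ b j k) :
    Compatible b fun k => uncross i j (L k) :=
  fun _ _ k => uncross_lt_uncross_of_lt (w := (b · k)) (fun p q => hL p q k) (hsub k)

theorem exists_compatible (b : Fin m → Fin n → ℕ) :
    ∃ L : Fin n → Equiv.Perm (Fin m), Compatible b L := by
  refine ⟨fun k => (Tuple.sort (b · k)).symm, fun i j k hlt => ?_⟩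
  contrapose! hlt
  simpa using Tuple.monotone_sort (b · k) hlt

theorem exists_compatible_forall_totalCross_le (b : Fin m → Fin n → ℕ) :
    ∃ L : Fin n → Equiv.Perm (Fin m), Compatible b L ∧
      ∀ L' : Fin n → Equiv.Perm (Fin m), Compatible b L' → totalCross L ≤ totalCross L' :=
  Set.exists_min_image {L | Compatible b L} totalCross (Set.toFinite _) (exists_compatible b)

end Layout

theorem optimal_layout_respecting_containment {m n : ℕ} (hm : 0 < m) (hn : 0 < n)
    (b : Fin m → Fin n → ℕ) (i j : Fin m) (hij : i ≠ j)
    (hsub : ∀ k : Fin n, b i k ≤ b j k) :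
    ∃ L : Fin n → Equiv.Perm (Fin m), Compatible b L ∧
      (∀ L' : Fin n → Equiv.Perm (Fin m), Compatible b L' → totalCross L ≤ totalCross L') ∧
      ∀ k : Fin n, L k i < L k j := by
  obtain ⟨L, hL, hmin⟩ := exists_compatible_forall_totalCross_le b
  refine ⟨fun k => uncross i j (L k), hL.uncross hsub, fun L' hL' => ?_, fun k => ?_⟩
  · exact (totalCross_uncross_le i j L).trans (hmin L' hL')
  · exact uncross_lt_uncross hij (L k)
end

section
/- For every sequence Λ = (λ_1, …, λ_n) of permutations of {1,…,m}, the total crossing number of Λ is at most the total wiggle of Λ; that is, (total crossing number of Λ) ≤ Σ_{k=1}^{n−1} Σ_{i=1}^{m} |λ_{k+1}(i) − λ_k(i)|. -/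
open Finset

/-!
Two consecutive elements are treated separately. If `i` starts below `j` and ends above it, then
either `i` moves up past the starting position of `j`, or `j` moves down past the final position
of `i`, since otherwise `j` would still end above `i`. A curve moving by distance `d` passes at
most `d` positions, each occupied by at most one curve, so charging every crossing to the curve
that passes bounds the crossings by the total distance moved.
-/

section Inversions

variable {ι : Type*}

/-- The ordered pair `(i, j)` is inverted from the arrangement `f` to the arrangement `g`: `i` is
below `j` in `f` and above `j` in `g`. Two curves cross if one of their two orderings is
inverted, and then exactly one is. -/
def IsInverted {α β : Type*} [LT α] [LT β] (f : ι → α) (g : ι → β) (i j : ι) : Prop :=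
  f i < f j ∧ g j < g i

instance {α β : Type*} [LT α] [LT β] [DecidableLT α] [DecidableLT β] (f : ι → α) (g : ι → β) :
    DecidableRel (IsInverted f g) :=
  fun i j => inferInstanceAs (Decidable (f i < f j ∧ g j < g i))

instance {α β : Type*} [Preorder α] [LT β] (f : ι → α) (g : ι → β) :
    Std.Asymm (IsInverted f g) :=
  ⟨fun _ _ hij hji => lt_asymm hij.1 hji.1⟩

variable [Fintype ι]

theorem card_filter_lt_and_or_swap [LinearOrder ι] (r : ι → ι → Prop) [DecidableRel r]
    [Std.Asymm r] :
    #{p : ι × ι | p.1 < p.2 ∧ (r p.1 p.2 ∨ r p.2 p.1)} = #{p : ι × ι | r p.1 p.2} := by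
  have not_swap : ∀ i j, r i j → ¬ r j i := Std.Asymm.asymm
  -- The bijection reorients each pair along `r`; its inverse reorients along `<`.
  refine card_nbij' (fun p => if r p.1 p.2 then p else p.swap)
    (fun p => if p.1 < p.2 then p else p.swap) ?_ ?_ ?_ ?_ <;>
  · rintro ⟨i, j⟩ h
    grind

theorem card_filter_snd_mem {κ : Type*} [Fintype κ] [DecidableEq κ] (s : ι → Finset κ) :
    #{p : ι × κ | p.2 ∈ s p.1} = ∑ i, #(s i) := by
  rw [card_filter, Fintype.sum_prod_type]
  simp

theorem card_filter_fst_mem {κ : Type*} [Fintype κ] [DecidableEq ι] (s : κ → Finset ι) :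
    #{p : ι × κ | p.1 ∈ s p.2} = ∑ j, #(s j) := by
  rw [card_filter, Fintype.sum_prod_type_right]
  simp

/-- The items whose position under `f` is passed by `i` when it moves up from `f i` to `g i`;
empty if `i` does not move up. -/
def passedFrom (f g : ι → ℤ) (i : ι) : Finset ι :=
  {j | f i < f j ∧ f j ≤ g i}

theorem mem_passedFrom {f g : ι → ℤ} {i j : ι} :
    j ∈ passedFrom f g i ↔ f i < f j ∧ f j ≤ g i := by
  simp [passedFrom]

theorem card_passedFrom_le {f : ι → ℤ} (hf : f.Injective) (g : ι → ℤ) (i : ι) :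
    #(passedFrom f g i) ≤ (g i - f i).toNat := by
  rw [← Int.card_Ioc]
  exact card_le_card_of_injOn f (by simp [Set.MapsTo, passedFrom]) hf.injOn

theorem IsInverted.mem_passedFrom_or {f g : ι → ℤ} {i j : ι} (h : IsInverted f g i j) :
    j ∈ passedFrom f g i ∨ i ∈ passedFrom g f j := by
  simp only [mem_passedFrom]
  rcases le_or_gt (f j) (g i) with hle | hlt
  · exact .inl ⟨h.1, hle⟩
  · exact .inr ⟨h.2, hlt.le⟩

theorem card_isInverted_le_sum_card_passedFrom (f g : ι → ℤ) :
    #{p : ι × ι | IsInverted f g p.1 p.2} ≤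
      ∑ i, (#(passedFrom f g i) + #(passedFrom g f i)) := by
  classical
  calc #{p : ι × ι | IsInverted f g p.1 p.2}
      ≤ #(({p | p.2 ∈ passedFrom f g p.1} : Finset (ι × ι)) ∪
          ({p | p.1 ∈ passedFrom g f p.2} : Finset (ι × ι))) := by
        refine card_le_card fun p hp => ?_
        simpa using (mem_filter.1 hp).2.mem_passedFrom_or
    _ ≤ #{p : ι × ι | p.2 ∈ passedFrom f g p.1} + #{p : ι × ι | p.1 ∈ passedFrom g f p.2} :=
        card_union_le _ _
    _ = ∑ i, #(passedFrom f g i) + ∑ j, #(passedFrom g f j) := by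
        rw [card_filter_snd_mem, card_filter_fst_mem]
    _ = ∑ i, (#(passedFrom f g i) + #(passedFrom g f i)) := sum_add_distrib.symm

theorem card_isInverted_le_sum_abs_sub {f g : ι → ℤ} (hf : f.Injective) (hg : g.Injective) :
    (#{p : ι × ι | IsInverted f g p.1 p.2} : ℤ) ≤ ∑ i, |g i - f i| := by
  have passed_le (i : ι) : #(passedFrom f g i) + #(passedFrom g f i) ≤ (g i - f i).natAbs := by
    rw [← Int.toNat_add_toNat_neg_eq_natAbs, neg_sub]
    exact add_le_add (card_passedFrom_le hf g i) (card_passedFrom_le hg f i)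
  simp only [← Int.natCast_natAbs]
  exact_mod_cast (card_isInverted_le_sum_card_passedFrom f g).trans
    (sum_le_sum fun i _ => passed_le i)

end Inversions

section Layouts

variable {m n : ℕ}

/-- The vertical position of curve `i` under the permutation `σ`, as an integer so that
displacements can be subtracted. -/
def curvePosition (σ : Equiv.Perm (Fin m)) (i : Fin m) : ℤ :=
  (σ i : ℕ)

theorem curvePosition_injective (σ : Equiv.Perm (Fin m)) : (curvePosition σ).Injective :=
  Nat.cast_injective.comp (Fin.val_injective.comp σ.injective)

theorem totalCross_eq_sum_card (L : Fin n → Equiv.Perm (Fin m)) :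
    totalCross L = ∑ k, #{p : Fin m × Fin m | p.1 < p.2 ∧ CrossAt L p.1 p.2 k} := by
  simp only [totalCross, crossCount, ← filter_filter]
  exact sum_card_bipartiteAbove_eq_sum_card_bipartiteBelow
    fun (p : Fin m × Fin m) k => CrossAt L p.1 p.2 k

theorem crossAt_iff_isInverted_or (L : Fin n → Equiv.Perm (Fin m)) {k : Fin n}
    (hk : (k : ℕ) + 1 < n) (i j : Fin m) :
    CrossAt L i j k ↔
      IsInverted (curvePosition (L k)) (curvePosition (L ⟨k + 1, hk⟩)) i j ∨
        IsInverted (curvePosition (L k)) (curvePosition (L ⟨k + 1, hk⟩)) j i := by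
  simp [CrossAt, IsInverted, curvePosition, hk]

theorem card_crossAt_le_sum_abs_sub (L : Fin n → Equiv.Perm (Fin m)) {k : Fin n}
    (hk : (k : ℕ) + 1 < n) :
    (#{p : Fin m × Fin m | p.1 < p.2 ∧ CrossAt L p.1 p.2 k} : ℤ) ≤
      ∑ i, |curvePosition (L ⟨k + 1, hk⟩) i - curvePosition (L k) i| := by
  simp only [crossAt_iff_isInverted_or L hk, card_filter_lt_and_or_swap]
  exact card_isInverted_le_sum_abs_sub (curvePosition_injective _) (curvePosition_injective _)

end Layouts

theorem crossings_le_wiggle {m n : ℕ} (hm : 0 < m) (hn : 0 < n)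
    (L : Fin n → Equiv.Perm (Fin m)) :
    (totalCross L : ℤ) ≤ totalWiggle L := by
  rw [totalCross_eq_sum_card, totalWiggle, Nat.cast_sum]
  refine sum_le_sum fun k _ => ?_
  by_cases hk : (k : ℕ) + 1 < n
  · simpa only [hk, dite_true, curvePosition] using card_crossAt_le_sum_abs_sub L hk
  · simp [CrossAt, hk]
end
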